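/- Let n be a positive integer, L an n×n real symmetric positive definite matrix, √(L⁻¹) the unique symmetric positive definite square root of L⁻¹, a ∈ ℝⁿ nonzero, g ∈ ℝⁿ, τ > 0, and c ∈ ℝ; set b̂ = √(L⁻¹)a / ‖√(L⁻¹)a‖. Then the function F(δ) = g·δ + (1/(4τ)) (Lδ)·δ attains a unique minimum over the affine set {δ ∈ ℝⁿ : a·δ = c}, and the minimizer is δ* = −2τ √(L⁻¹) (I − b̂⊗b̂) √(L⁻¹) g + c · L⁻¹a / ‖√(L⁻¹)a‖², where b̂⊗b̂ denotes the outer product (rank-one) matrix and I the n×n identity. -/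

import Mathlib

open Matrix

/-!
The quadratic objective differs from its value at a point `x` with `L x = μ a - 2 τ g` (the Lagrange
condition) by `(1/(4τ)) (L e)·e` along directions `e ⊥ a`, so a feasible such `x` is the strict
minimizer; feasibility of `x = L⁻¹ (μ a - 2 τ g)` fixes the multiplier `μ`. For any factorization
`L⁻¹ = S Sᵀ`, conjugating the projection off `Sᵀ a` by `S` gives `L⁻¹` minus the rank-one matrix
`(L⁻¹ a) ⊗ (L⁻¹ a) / (a · L⁻¹ a)`, which identifies `x` with the projection formula.
-/

section Objective

variable {ι K : Type*} [Fintype ι] [Field K] {L : Matrix ι ι K} {a g x δ : ι → K} {τ μ : K}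

/-- The incremental objective `F(δ) = g·δ + (1/(4τ)) (Lδ)·δ` of the growth problem. -/
def incrementalObjective (L : Matrix ι ι K) (g : ι → K) (τ : K) (δ : ι → K) : K :=
  g ⬝ᵥ δ + (1 / (4 * τ)) * (L *ᵥ δ ⬝ᵥ δ)

lemma incrementalObjective_eq_add_of_mulVec_eq [NeZero (2 : K)] (hL : L.IsSymm) (hτ : τ ≠ 0)
    (hx : L *ᵥ x = μ • a - (2 * τ) • g) (hδ : a ⬝ᵥ δ = a ⬝ᵥ x) :
    incrementalObjective L g τ δ =
      incrementalObjective L g τ x + (1 / (4 * τ)) * (L *ᵥ (δ - x) ⬝ᵥ (δ - x)) := by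
  have hsymm : L *ᵥ δ ⬝ᵥ x = L *ᵥ x ⬝ᵥ δ := by
    rw [dotProduct_comm, dotProduct_mulVec, ← mulVec_transpose, hL.eq]
  have hstationary (v : ι → K) : L *ᵥ x ⬝ᵥ v = μ * (a ⬝ᵥ v) - 2 * τ * (g ⬝ᵥ v) := by
    rw [hx, sub_dotProduct, smul_dotProduct, smul_dotProduct, smul_eq_mul, smul_eq_mul]
  have h2 : (2 : K) ≠ 0 := two_ne_zero
  have h4 : (4 : K) = 2 * 2 := by norm_num
  simp only [incrementalObjective, mulVec_sub, sub_dotProduct, dotProduct_sub, hsymm,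
    hstationary, hδ, h4]
  field_simp
  ring

theorem incrementalObjective_lt_of_mulVec_eq [LinearOrder K] [IsStrictOrderedRing K] [StarRing K]
    [TrivialStar K] (hL : L.PosDef) (hτ : 0 < τ) (hx : L *ᵥ x = μ • a - (2 * τ) • g)
    (hδ : a ⬝ᵥ δ = a ⬝ᵥ x) (hne : δ ≠ x) :
    incrementalObjective L g τ x < incrementalObjective L g τ δ := by
  have hsymm : L.IsSymm := by simpa using hL.isHermitian
  have hpos : 0 < L *ᵥ (δ - x) ⬝ᵥ (δ - x) := by
    simpa [dotProduct_comm] using hL.dotProduct_mulVec_pos (sub_ne_zero.mpr hne)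
  rw [incrementalObjective_eq_add_of_mulVec_eq hsymm hτ.ne' hx hδ]
  exact lt_add_of_pos_right _ (by positivity)

end Objective

section Minimizer

variable {ι K : Type*} [Fintype ι] [DecidableEq ι] [Field K]

/-- The Lagrange multiplier `μ` of the constraint `a·δ = c`, scaled so that the stationarity
condition reads `L δ = μ a - 2 τ g`. -/
noncomputable def massBalanceMultiplier (L : Matrix ι ι K) (a g : ι → K) (τ c : K) : K :=
  (c + 2 * τ * (a ⬝ᵥ L⁻¹ *ᵥ g)) / (a ⬝ᵥ L⁻¹ *ᵥ a)

/-- The stationary point of the incremental objective on `{δ | a·δ = c}`, obtained by solving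
`L δ = μ a - 2 τ g` with the multiplier `μ` of the constraint. -/
noncomputable def massBalanceMinimizer (L : Matrix ι ι K) (a g : ι → K) (τ c : K) : ι → K :=
  L⁻¹ *ᵥ (massBalanceMultiplier L a g τ c • a - (2 * τ) • g)

variable {L : Matrix ι ι K} {a : ι → K}

lemma mulVec_massBalanceMinimizer (hL : IsUnit L.det) (a g : ι → K) (τ c : K) :
    L *ᵥ massBalanceMinimizer L a g τ c = massBalanceMultiplier L a g τ c • a - (2 * τ) • g := by
  rw [massBalanceMinimizer, mulVec_mulVec, mul_nonsing_inv _ hL, one_mulVec]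

lemma dotProduct_massBalanceMinimizer (ha : a ⬝ᵥ L⁻¹ *ᵥ a ≠ 0) (g : ι → K) (τ c : K) :
    a ⬝ᵥ massBalanceMinimizer L a g τ c = c := by
  simp only [massBalanceMinimizer, massBalanceMultiplier, mulVec_sub, mulVec_smul,
    dotProduct_sub, dotProduct_smul, smul_eq_mul]
  rw [div_mul_cancel₀ _ ha, add_sub_cancel_right]

lemma massBalanceMinimizer_eq_rankOne (hL : L.IsSymm) (a g : ι → K) (τ c : K) :
    massBalanceMinimizer L a g τ c =
      (-(2 * τ)) • (L⁻¹ - (a ⬝ᵥ L⁻¹ *ᵥ a)⁻¹ • vecMulVec (L⁻¹ *ᵥ a) (L⁻¹ *ᵥ a)) *ᵥ g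
        + (c / (a ⬝ᵥ L⁻¹ *ᵥ a)) • L⁻¹ *ᵥ a := by
  have hsymm : L⁻¹ *ᵥ a ⬝ᵥ g = a ⬝ᵥ L⁻¹ *ᵥ g := by
    rw [dotProduct_mulVec, ← mulVec_transpose, hL.inv.eq]
  simp only [massBalanceMinimizer, massBalanceMultiplier, mulVec_sub, mulVec_smul, sub_mulVec,
    smul_mulVec, vecMulVec_mulVec, op_smul_eq_smul, hsymm]
  module

end Minimizer

section Projection

variable {ι κ : Type*} [Fintype ι] [Fintype κ]

lemma vecMulVec_inv_sqrt_smul_self (v : κ → ℝ) :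
    vecMulVec ((√(v ⬝ᵥ v))⁻¹ • v) ((√(v ⬝ᵥ v))⁻¹ • v) = (v ⬝ᵥ v)⁻¹ • vecMulVec v v := by
  have hv : 0 ≤ v ⬝ᵥ v := by simpa using dotProduct_star_self_nonneg v
  rw [smul_vecMulVec, vecMulVec_smul, smul_smul, ← mul_inv, Real.mul_self_sqrt hv]

lemma transpose_mulVec_dotProduct_self {R : Type*} [CommSemiring R] (S : Matrix ι κ R)
    (a : ι → R) : Sᵀ *ᵥ a ⬝ᵥ Sᵀ *ᵥ a = a ⬝ᵥ (S * Sᵀ) *ᵥ a := by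
  rw [← mulVec_mulVec, dotProduct_mulVec a, ← mulVec_transpose]

lemma mul_one_sub_smul_vecMulVec_mul_transpose {R : Type*} [CommRing R] [DecidableEq κ]
    (S : Matrix ι κ R) (a : ι → R) (t : R) :
    S * (1 - t • vecMulVec (Sᵀ *ᵥ a) (Sᵀ *ᵥ a)) * Sᵀ =
      S * Sᵀ - t • vecMulVec ((S * Sᵀ) *ᵥ a) ((S * Sᵀ) *ᵥ a) := by
  rw [Matrix.mul_sub, Matrix.sub_mul, Matrix.mul_one, Matrix.mul_smul, Matrix.smul_mul,
    mul_vecMulVec, vecMulVec_mul, vecMul_transpose, mulVec_mulVec]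

end Projection

theorem global_mass_balance_unique_minimizer_general {ι κ : Type*} [Fintype ι] [Fintype κ]
    [DecidableEq ι] [DecidableEq κ] {L : Matrix ι ι ℝ} {S : Matrix ι κ ℝ} (hL : L.PosDef)
    (hS : S * Sᵀ = L⁻¹) {a : ι → ℝ} (ha : a ≠ 0) (g : ι → ℝ) {τ : ℝ} (hτ : 0 < τ) (c : ℝ) :
    let nrm2 : ℝ := Sᵀ *ᵥ a ⬝ᵥ Sᵀ *ᵥ a
    let bhat : κ → ℝ := (√nrm2)⁻¹ • Sᵀ *ᵥ a
    let δstar : ι → ℝ :=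
      (-(2 * τ)) • (S * (1 - vecMulVec bhat bhat) * Sᵀ) *ᵥ g + (c / nrm2) • L⁻¹ *ᵥ a
    a ⬝ᵥ δstar = c ∧ ∀ δ : ι → ℝ, a ⬝ᵥ δ = c → δ ≠ δstar →
      incrementalObjective L g τ δstar < incrementalObjective L g τ δ := by
  intro nrm2 bhat δstar
  have hsymm : L.IsSymm := by simpa using hL.isHermitian
  have hpos : 0 < a ⬝ᵥ L⁻¹ *ᵥ a := by simpa using hL.inv.dotProduct_mulVec_pos ha
  have hnrm2 : nrm2 = a ⬝ᵥ L⁻¹ *ᵥ a := by rw [← hS, ← transpose_mulVec_dotProduct_self]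
  have hproj : S * (1 - vecMulVec bhat bhat) * Sᵀ =
      L⁻¹ - nrm2⁻¹ • vecMulVec (L⁻¹ *ᵥ a) (L⁻¹ *ᵥ a) := by
    rw [vecMulVec_inv_sqrt_smul_self, mul_one_sub_smul_vecMulVec_mul_transpose, hS]
  have hδstar : δstar = massBalanceMinimizer L a g τ c := by
    rw [massBalanceMinimizer_eq_rankOne hsymm, ← hnrm2, ← hproj]
  have hfeasible : a ⬝ᵥ massBalanceMinimizer L a g τ c = c :=
    dotProduct_massBalanceMinimizer hpos.ne' g τ c
  rw [hδstar]
  refine ⟨hfeasible, fun δ hδ hne => ?_⟩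
  exact incrementalObjective_lt_of_mulVec_eq hL hτ
    (mulVec_massBalanceMinimizer hL.det_pos.ne'.isUnit a g τ c) (hδ.trans hfeasible.symm) hne

/-- The incremental objective `F(δ) = g·δ + (1/(4τ))(Lδ)·δ` attains a unique minimum over
the affine set `{δ : a·δ = c}`, at
`δ* = −2τ √(L⁻¹)(I − b̂⊗b̂)√(L⁻¹) g + c L⁻¹a/‖√(L⁻¹)a‖²`, where `b̂ = √(L⁻¹)a/‖√(L⁻¹)a‖`
and `S = √(L⁻¹)` is the unique symmetric positive definite square root of `L⁻¹`. -/
theorem global_mass_balance_unique_minimizer (n : ℕ) (hn : 0 < n)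
    (L S : Matrix (Fin n) (Fin n) ℝ) (hL : L.PosDef)
    (hS : S.PosDef) (hSS : S * S = L⁻¹)
    (a : Fin n → ℝ) (ha : a ≠ 0) (g : Fin n → ℝ) (τ : ℝ) (hτ : 0 < τ) (c : ℝ) :
    let F : (Fin n → ℝ) → ℝ := fun δ => g ⬝ᵥ δ + (1 / (4 * τ)) * (L.mulVec δ ⬝ᵥ δ)
    let nrm2 : ℝ := S.mulVec a ⬝ᵥ S.mulVec a
    let bhat : Fin n → ℝ := (Real.sqrt nrm2)⁻¹ • S.mulVec a
    let δstar : Fin n → ℝ :=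
      (-(2 * τ)) • (S * ((1 : Matrix (Fin n) (Fin n) ℝ) - vecMulVec bhat bhat) * S).mulVec g
        + (c / nrm2) • L⁻¹.mulVec a
    a ⬝ᵥ δstar = c ∧ ∀ δ : Fin n → ℝ, a ⬝ᵥ δ = c → δ ≠ δstar → F δstar < F δ := by
  have hST : Sᵀ = S := by simpa using hS.isHermitian.eq
  simpa only [hST, incrementalObjective] using
    global_mass_balance_unique_minimizer_general hL (S := S) (by rwa [hST]) ha g hτ c
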